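/- Let k be a field, let R be a commutative Artinian local k-algebra, and let f : R → S be a surjective homomorphism of commutative rings with S nontrivial. Let φ : K → L be a morphism of ℕ-indexed chain complexes of R-modules such that every term of K and of L is a flat R-module. If the base-changed map φ ⊗_R S : K ⊗_R S → L ⊗_R S (formed degreewise) is a quasi-isomorphism, then φ is a quasi-isomorphism. -/

import Mathlib

open CategoryTheory Limits

noncomputable instance {R S : Type} [CommRing R] [CommRing S] (f : R →+* S) :
    (ModuleCat.extendScalars.{0, 0, 0} f).Additive := by
  haveI h1 : PreservesColimitsOfSize.{0, 0} (ModuleCat.extendScalars.{0, 0, 0} f) :=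
    (ModuleCat.extendRestrictScalarsAdj f).leftAdjoint_preservesColimits
  haveI h2 : Functor.IsLeftAdjoint (ModuleCat.extendScalars.{0, 0, 0} f) :=
    (ModuleCat.extendRestrictScalarsAdj f).isLeftAdjoint
  haveI h2' : PreservesColimitsOfShape (Discrete WalkingPair)
      (ModuleCat.extendScalars.{0, 0, 0} f) :=
    h1.preservesColimitsOfShape
  haveI h3 : PreservesBinaryBiproducts (ModuleCat.extendScalars.{0, 0, 0} f) :=
    preservesBinaryBiproducts_of_preservesBinaryCoproducts _
  exact Functor.additive_of_preservesBinaryBiproducts _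

/-- The degreewise base change functor `- ⊗_R S` on `ℕ`-indexed chain complexes of
`R`-modules along a ring homomorphism `f : R → S`. -/
noncomputable def baseChangeComplexFunctor {R S : Type} [CommRing R] [CommRing S]
    (f : R →+* S) :
    ChainComplex (ModuleCat.{0} R) ℕ ⥤ ChainComplex (ModuleCat.{0} S) ℕ :=
  (ModuleCat.extendScalars.{0, 0, 0} f).mapHomologicalComplex (ComplexShape.down ℕ)

/-!
By a mapping cylinder construction, `φ` becomes, up to homotopy equivalence, a degreewise split
inclusion, so that both `φ` and its base change are quasi-isomorphisms exactly when a certain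
complex of flat modules, respectively its base change, is acyclic. For a complex `C` of flat
modules, exactness descends from `S ⊗ C` to `C` one degree at a time: once the boundaries in degree
`n - 1` are known to be flat, the cycles in degree `n` are flat and their formation commutes with
base change, so `S ⊗ Cₙ₊₁ → S ⊗ Zₙ` is surjective and Nakayama's lemma for the nilpotent kernel of
`R → S` shows that `Cₙ₊₁ → Zₙ` is surjective.
-/

open HomologicalComplex
open scoped TensorProduct

section LinearAlgebra

variable {R : Type*} [CommRing R]
  {M N P : Type*} [AddCommGroup M] [Module R M] [AddCommGroup N] [Module R N]
  [AddCommGroup P] [Module R P]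

lemma eq_top_of_isNilpotent_of_top_le_sup_smul {I : Ideal R} (hI : IsNilpotent I)
    {Q : Submodule R M} (hQ : ⊤ ≤ Q ⊔ I • ⊤) : Q = ⊤ := by
  have top_le_sup_pow_smul (n : ℕ) : ⊤ ≤ Q ⊔ I ^ n • ⊤ := by
    induction n with
    | zero => simp
    | succ n ih =>
      calc ⊤ ≤ Q ⊔ I • ⊤ := hQ
        _ ≤ Q ⊔ I • (Q ⊔ I ^ n • ⊤) := sup_le_sup_left (Submodule.smul_mono le_rfl ih) Q
        _ = Q ⊔ (I • Q ⊔ I ^ (n + 1) • ⊤) := by rw [Submodule.smul_sup, ← mul_smul, ← pow_succ']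
        _ ≤ Q ⊔ I ^ (n + 1) • ⊤ := sup_le le_sup_left (sup_le_sup_right Submodule.smul_le_right _)
  obtain ⟨n, hn⟩ := hI
  simpa [hn] using top_le_sup_pow_smul n

lemma flat_ker_of_surjective [Module.Flat R M] [Module.Flat R N] {g : M →ₗ[R] N}
    (hg : Function.Surjective g) : Module.Flat R (LinearMap.ker g) := by
  rw [Module.Flat.iff_rTensor_preserves_injective_linearMap]
  intro A B _ _ _ _ u hu
  have lTensor_ker_injective : Function.Injective ((LinearMap.ker g).subtype.lTensor A) :=
    LinearMap.lTensor_injective_of_exact_of_flat g hg _ (Submodule.injective_subtype _)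
      (LinearMap.exact_subtype_ker_map g) A
  have comp_injective : Function.Injective
      ((LinearMap.ker g).subtype.lTensor B ∘ₗ u.rTensor (LinearMap.ker g)) := by
    rw [LinearMap.lTensor_comp_rTensor, ← LinearMap.rTensor_comp_lTensor]
    exact (Module.Flat.rTensor_preserves_injective_linearMap (M := M) u hu).comp
      lTensor_ker_injective
  exact .of_comp comp_injective

lemma flat_ker_of_flat_range [Module.Flat R M] {g : M →ₗ[R] N}
    [Module.Flat R (LinearMap.range g)] : Module.Flat R (LinearMap.ker g) := by
  rw [← LinearMap.ker_rangeRestrict]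
  exact flat_ker_of_surjective g.surjective_rangeRestrict

lemma flat_prod [Module.Flat R M] [Module.Flat R N] : Module.Flat R (M × N) := by
  rw [Module.Flat.iff_rTensor_preserves_injective_linearMap]
  intro A B _ _ _ _ u hu
  have prodRight_comp_rTensor :
      (TensorProduct.prodRight R R B M N).toLinearMap ∘ₗ u.rTensor (M × N) =
        (u.rTensor M).prodMap (u.rTensor N) ∘ₗ
          (TensorProduct.prodRight R R A M N).toLinearMap :=
    TensorProduct.ext' fun a ⟨m, n⟩ ↦ by simp
  have prodMap_injective : Function.Injective ((u.rTensor M).prodMap (u.rTensor N)) :=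
    (Module.Flat.rTensor_preserves_injective_linearMap u hu).prodMap
      (Module.Flat.rTensor_preserves_injective_linearMap u hu)
  refine .of_comp (f := (TensorProduct.prodRight R R B M N).toLinearMap) ?_
  rw [← LinearMap.coe_comp, prodRight_comp_rTensor, LinearMap.coe_comp]
  exact prodMap_injective.comp (TensorProduct.prodRight R R A M N).injective

section BaseChange

variable {S : Type*} [CommRing S] [Algebra R S]

lemma ker_tensorProduct_mk_one (hS : Function.Surjective (algebraMap R S)) :
    LinearMap.ker (TensorProduct.mk R S M 1) = RingHom.ker (algebraMap R S) • ⊤ := by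
  have ker_exact : Function.Exact (RingHom.ker (algebraMap R S)).subtype (Algebra.linearMap R S) :=
    fun r ↦ by simp [RingHom.mem_ker]
  have mk_eq : TensorProduct.mk R S M 1 =
      (Algebra.linearMap R S).rTensor M ∘ₗ (TensorProduct.lid R M).symm.toLinearMap := by
    ext m; simp
  rw [← Ideal.subtype_rTensor_range, mk_eq, LinearMap.ker_comp,
    (rTensor_exact M ker_exact hS).linearMap_ker_eq, Submodule.comap_equiv_eq_map_symm,
    LinearEquiv.symm_symm, LinearMap.range_comp]

lemma surjective_of_surjective_lTensor (hS : Function.Surjective (algebraMap R S))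
    (hnil : IsNilpotent (RingHom.ker (algebraMap R S))) {g : M →ₗ[R] N}
    (hg : Function.Surjective (g.lTensor S)) : Function.Surjective g := by
  rw [← LinearMap.range_eq_top]
  refine eq_top_of_isNilpotent_of_top_le_sup_smul hnil fun y _ ↦ ?_
  obtain ⟨t, ht⟩ := hg (1 ⊗ₜ y)
  obtain ⟨x, rfl⟩ := TensorProduct.mk_surjective R M S hS t
  have sub_mem : y - g x ∈ RingHom.ker (algebraMap R S) • (⊤ : Submodule R N) := by
    rw [← ker_tensorProduct_mk_one hS]
    simpa [TensorProduct.tmul_sub, sub_eq_zero] using ht.symm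
  simpa using Submodule.add_mem_sup (LinearMap.mem_range_self g x) sub_mem

lemma exact_of_exact_lTensor (hS : Function.Surjective (algebraMap R S))
    (hnil : IsNilpotent (RingHom.ker (algebraMap R S)))
    [Module.Flat R N] {f : M →ₗ[R] N} {g : N →ₗ[R] P}
    [Module.Flat R (LinearMap.range g)] (hgf : g ∘ₗ f = 0)
    (hfg : Function.Exact (f.lTensor S) (g.lTensor S)) : Function.Exact f g := by
  have range_le : LinearMap.range f ≤ LinearMap.ker g := LinearMap.range_le_ker_iff.mpr hgf
  let f' : M →ₗ[R] LinearMap.ker g := f.codRestrict (LinearMap.ker g) fun x ↦ range_le ⟨x, rfl⟩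
  let ι : LinearMap.ker g →ₗ[R] N := (LinearMap.ker g).subtype
  have lTensor_ι_injective : Function.Injective (ι.lTensor S) :=
    LinearMap.lTensor_injective_of_exact_of_flat g.rangeRestrict g.surjective_rangeRestrict ι
      (Submodule.injective_subtype _) (fun y ↦ by simp [ι, Subtype.ext_iff]) S
  have lTensor_f'_surjective : Function.Surjective (f'.lTensor S) := fun t ↦ by
    have lTensor_g_eq_zero : g.lTensor S (ι.lTensor S t) = 0 := by
      rw [← LinearMap.comp_apply, ← LinearMap.lTensor_comp, LinearMap.comp_ker_subtype,
        LinearMap.lTensor_zero, LinearMap.zero_apply]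
    obtain ⟨s, hs⟩ := (hfg _).mp lTensor_g_eq_zero
    refine ⟨s, lTensor_ι_injective ?_⟩
    rwa [← LinearMap.comp_apply, ← LinearMap.lTensor_comp]
  have f'_surjective := surjective_of_surjective_lTensor hS hnil lTensor_f'_surjective
  intro y
  refine ⟨fun hy ↦ ?_, fun hy ↦ range_le hy⟩
  obtain ⟨x, hx⟩ := f'_surjective ⟨y, hy⟩
  exact ⟨x, congrArg Subtype.val hx⟩

end BaseChange

end LinearAlgebra

lemma isNilpotent_of_isArtinianRing_of_ne_top {R : Type*} [CommRing R] [IsArtinianRing R]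
    [IsLocalRing R] {I : Ideal R} (hI : I ≠ ⊤) : IsNilpotent I := by
  obtain ⟨n, hn⟩ := (isArtinianRing_iff_isNilpotent_maximalIdeal R).mp ‹_›
  exact ⟨n, le_bot_iff.mp <|
    (Ideal.pow_right_mono (IsLocalRing.le_maximalIdeal hI) n).trans hn.le⟩

section MappingCylinder

section Preadditive

variable {C ι : Type*} [Category C] [Preadditive C] [HasBinaryBiproducts C] {c : ComplexShape ι}

/-- The projection of `L ⊞ D` onto `L` as a homotopy equivalence, for a contractible complex `D`. -/
noncomputable def biprodFstHomotopyEquiv (L : HomologicalComplex C c)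
    {D : HomologicalComplex C c} (hD : Homotopy (𝟙 D) 0) : HomotopyEquiv (L ⊞ D) L where
  hom := biprod.fst
  inv := biprod.inl
  homotopyHomInvId := .symm <|
    (Homotopy.ofEq (by simp)).trans <|
      ((Homotopy.refl (biprod.fst ≫ biprod.inl)).add
        ((hD.compLeft biprod.snd).compRight biprod.inr)).trans (.ofEq (by simp))
  homotopyInvHomId := .ofEq (by simp)

variable [DecidableRel c.Rel]

lemma id_homotopyCofiber_id_eq_nullHomotopicMap' (K : HomologicalComplex C c)
    (hc : ∀ j, ∃ i, c.Rel i j) :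
    𝟙 (homotopyCofiber (𝟙 K)) = Homotopy.nullHomotopicMap' fun i j hij ↦
      homotopyCofiber.sndX (𝟙 K) i ≫ homotopyCofiber.inlX (𝟙 K) i j hij := by
  ext j
  obtain ⟨i, hij⟩ := hc j
  by_cases hj : c.Rel j (c.next j)
  · refine homotopyCofiber.ext_from_X (𝟙 K) _ j hj ?_ ?_
    · simp [Homotopy.nullHomotopicMap'_f hij hj, homotopyCofiber.d_sndX_assoc _ _ _ hj]
    · simp [Homotopy.nullHomotopicMap'_f hij hj, homotopyCofiber.inlX_d _ _ _ _ _ hj]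
  · have not_rel (k : ι) : ¬ c.Rel j k := fun hk ↦ hj (c.next_eq' hk ▸ hk)
    refine homotopyCofiber.ext_from_X' (𝟙 K) _ hj ?_
    simp [Homotopy.nullHomotopicMap'_f_of_not_rel_left hij not_rel,
      homotopyCofiber.inlX_d' _ _ _ _ hj]

/-- The null homotopy witnessing that the cone of the identity of `K` is contractible. -/
noncomputable def homotopyCofiberIdHomotopy (K : HomologicalComplex C c)
    (hc : ∀ j, ∃ i, c.Rel i j) : Homotopy (𝟙 (homotopyCofiber (𝟙 K))) 0 :=
  (Homotopy.ofEq (id_homotopyCofiber_id_eq_nullHomotopicMap' K hc)).trans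
    (Homotopy.nullHomotopy' _)

variable {K L : HomologicalComplex C c} (φ : K ⟶ L)

/-- The inclusion of `K` into the mapping cylinder of `φ`. The cylinder is modelled as
`L ⊞ homotopyCofiber (𝟙 K)`, so that `φ` enters only through this inclusion. -/
noncomputable def cylinderIncl : K ⟶ L ⊞ homotopyCofiber (𝟙 K) :=
  biprod.lift φ (homotopyCofiber.inr (𝟙 K))

lemma cylinderIncl_comp_fst : cylinderIncl φ ≫ biprod.fst = φ :=
  biprod.lift_fst _ _

lemma cylinderIncl_f_comp_snd_f_comp_sndX (i : ι) :
    (cylinderIncl φ).f i ≫ (biprod.snd : L ⊞ homotopyCofiber (𝟙 K) ⟶ _).f i ≫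
      homotopyCofiber.sndX (𝟙 K) i = 𝟙 (K.X i) := by
  simp [cylinderIncl]

end Preadditive

section Abelian

variable {A B ι : Type*} [Category A] [Abelian A] [Category B] [Abelian B] {c : ComplexShape ι}

lemma quasiIso_f_iff_acyclic_X₃ {T : ShortComplex (HomologicalComplex A c)} (hT : T.ShortExact) :
    QuasiIso T.f ↔ T.X₃.Acyclic := by
  refine ⟨hT.acyclic_X₃, fun acyclic_X₃ ↦ ⟨fun i ↦ ?_⟩⟩
  have isZero_homology (j : ι) : IsZero (T.X₃.homology j) :=
    (exactAt_iff_isZero_homology _ _).mp (acyclic_X₃ j)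
  have : Epi (homologyMap T.f i) :=
    (hT.homology_exact₂ i).epi_f ((isZero_homology i).eq_of_tgt _ _)
  have : Mono (homologyMap T.f i) := by
    by_cases hi : c.Rel (c.prev i) i
    · exact (hT.homology_exact₁ _ _ hi).mono_g ((isZero_homology _).eq_of_src _ _)
    · have := hT.mono_f
      exact mono_homologyMap_of_mono_of_not_rel T.f i fun j hj ↦ hi (c.prev_eq' hj ▸ hj)
  rw [quasiIsoAt_iff_isIso_homologyMap]
  exact isIso_of_mono_of_epi _

lemma shortExact_map_of_degreewise_splitting {T : ShortComplex (HomologicalComplex A c)}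
    (σ : ∀ i, (T.map (eval A c i)).Splitting) (F : A ⥤ B) [F.Additive] :
    (T.map (F.mapHomologicalComplex c)).ShortExact :=
  shortExact_of_degreewise_shortExact _ fun i ↦ ((σ i).map F).shortExact

variable [DecidableRel c.Rel] {K L : HomologicalComplex A c} (φ : K ⟶ L)

/-- The sequence `K ⟶ L ⊞ homotopyCofiber (𝟙 K) ⟶ coker` given by the cylinder inclusion of `φ`.
Its third term plays the role of the mapping cone of `φ`. -/
noncomputable def cylinderShortComplex : ShortComplex (HomologicalComplex A c) :=
  .mk (cylinderIncl φ) (cokernel.π _) (cokernel.condition _)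

/-- The degreewise splitting of `cylinderShortComplex φ`; they need not commute with the
differentials. -/
noncomputable def cylinderSplitting (i : ι) :
    ((cylinderShortComplex φ).map (eval A c i)).Splitting :=
  .ofExactOfRetraction _ ((ShortComplex.exact_cokernel _).map (eval A c i)) _
    (cylinderIncl_f_comp_snd_f_comp_sndX φ i)
    (inferInstanceAs (Epi ((eval A c i).map (cokernel.π _))))

lemma quasiIso_map_iff_acyclic_map_cylinderShortComplex_X₃ (hc : ∀ j, ∃ i, c.Rel i j)
    (F : A ⥤ B) [F.Additive] :
    QuasiIso ((F.mapHomologicalComplex c).map φ) ↔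
      ((F.mapHomologicalComplex c).obj (cylinderShortComplex φ).X₃).Acyclic := by
  have quasiIso_fst : QuasiIso
      ((F.mapHomologicalComplex c).map (biprod.fst : L ⊞ homotopyCofiber (𝟙 K) ⟶ L)) :=
    (F.mapHomotopyEquiv (biprodFstHomotopyEquiv L (homotopyCofiberIdHomotopy K hc))).quasiIso_hom
  calc QuasiIso ((F.mapHomologicalComplex c).map φ)
    _ ↔ QuasiIso ((F.mapHomologicalComplex c).map (cylinderIncl φ) ≫
          (F.mapHomologicalComplex c).map biprod.fst) := by
      rw [← Functor.map_comp, cylinderIncl_comp_fst]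
    _ ↔ QuasiIso ((F.mapHomologicalComplex c).map (cylinderIncl φ)) :=
      quasiIso_iff_comp_right _ _
    _ ↔ ((F.mapHomologicalComplex c).obj (cylinderShortComplex φ).X₃).Acyclic :=
      quasiIso_f_iff_acyclic_X₃ (shortExact_map_of_degreewise_splitting (cylinderSplitting φ) F)

lemma quasiIso_iff_acyclic_cylinderShortComplex_X₃ (hc : ∀ j, ∃ i, c.Rel i j) :
    QuasiIso φ ↔ (cylinderShortComplex φ).X₃.Acyclic :=
  quasiIso_map_iff_acyclic_map_cylinderShortComplex_X₃ φ hc (𝟭 A)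

end Abelian

end MappingCylinder

section FlatComplexes

universe v

variable {R : Type*} [CommRing R]

lemma flat_of_iso {M N : ModuleCat.{v} R} [Module.Flat R N] (e : M ≅ N) : Module.Flat R M :=
  .of_linearEquiv e.toLinearEquiv

instance flat_biprod (M N : ModuleCat.{v} R) [Module.Flat R M] [Module.Flat R N] :
    Module.Flat R ↑(M ⊞ N) :=
  have : Module.Flat R (M × N) := flat_prod
  flat_of_iso (ModuleCat.biprodIsoProd M N)

lemma flat_X₃_of_splitting {T : ShortComplex (ModuleCat.{v} R)} (hT : Module.Flat R T.X₂)
    (σ : T.Splitting) : Module.Flat R T.X₃ :=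
  .of_retract σ.s.hom T.g.hom (by rw [← ModuleCat.hom_comp, σ.s_g, ModuleCat.hom_id])

variable {ι : Type*} {c : ComplexShape ι} [DecidableRel c.Rel]
  {K L : HomologicalComplex (ModuleCat.{v} R) c} (φ : K ⟶ L)
  [∀ i, Module.Flat R (K.X i)] [∀ i, Module.Flat R (L.X i)]

lemma flat_homotopyCofiber_X (i : ι) : Module.Flat R ((homotopyCofiber φ).X i) := by
  by_cases hi : c.Rel i (c.next i)
  · exact flat_of_iso (homotopyCofiber.XIsoBiprod φ i _ hi)
  · exact flat_of_iso (homotopyCofiber.XIso φ i hi)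

lemma flat_cylinderShortComplex_X₃_X (i : ι) :
    Module.Flat R ((cylinderShortComplex φ).X₃.X i) :=
  have := flat_homotopyCofiber_X (𝟙 K) i
  have flat_cylinder : Module.Flat R ((L ⊞ homotopyCofiber (𝟙 K)).X i) :=
    flat_of_iso (biprodXIso _ _ i)
  flat_X₃_of_splitting flat_cylinder (cylinderSplitting φ i)

end FlatComplexes

section NilpotentBaseChange

variable {R S : Type} [CommRing R] [CommRing S] {f : R →+* S}

lemma exact_of_exact_extendScalars (hf : Function.Surjective f)
    (hker : IsNilpotent (RingHom.ker f))
    {T : ShortComplex (ModuleCat.{0} R)}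
    (hX₂ : Module.Flat R T.X₂) (hrange : Module.Flat R (LinearMap.range T.g.hom))
    (hT : (T.map (ModuleCat.extendScalars.{0, 0, 0} f)).Exact) : T.Exact := by
  let := f.toAlgebra
  have g_comp_f : T.g.hom ∘ₗ T.f.hom = 0 := by
    rw [← ModuleCat.hom_comp, T.zero, ModuleCat.hom_zero]
  rw [ShortComplex.ShortExact.moduleCat_exact_iff_function_exact] at hT ⊢
  exact exact_of_exact_lTensor (S := S) hf hker g_comp_f hT

lemma acyclic_of_acyclic_baseChange (hf : Function.Surjective f)
    (hker : IsNilpotent (RingHom.ker f))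
    {C : ChainComplex (ModuleCat.{0} R) ℕ}
    (hC : ∀ n, Module.Flat R (C.X n))
    (hbase : ((baseChangeComplexFunctor f).obj C).Acyclic) : C.Acyclic := by
  -- With truncated subtraction, `C.d n (n - 1)` is the outgoing differential also for `n = 0`.
  have next_eq (n : ℕ) : (ComplexShape.down ℕ).next n = n - 1 := by cases n <;> simp
  have exact_of_flat_range (n : ℕ) (hn : Module.Flat R (LinearMap.range (C.d n (n - 1)).hom)) :
      (C.sc' (n + 1) n (n - 1)).Exact :=
    exact_of_exact_extendScalars hf hker (hC n) hn
      ((exactAt_iff' _ _ _ _ (by simp) (next_eq n)).mp (hbase n))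
  have flat_range (n : ℕ) : Module.Flat R (LinearMap.range (C.d n (n - 1)).hom) := by
    induction n with
    | zero =>
      rw [C.shape _ _ (by simp), ModuleCat.hom_zero, LinearMap.range_zero]
      infer_instance
    | succ n ih =>
      have range_eq_ker :
          LinearMap.range (C.d (n + 1) n).hom = LinearMap.ker (C.d n (n - 1)).hom :=
        (exact_of_flat_range n ih).moduleCat_range_eq_ker
      rw [Nat.add_sub_cancel, range_eq_ker]
      exact flat_ker_of_flat_range
  exact fun n ↦ (exactAt_iff' C (n + 1) n (n - 1) (by simp) (next_eq n)).mpr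
    (exact_of_flat_range n (flat_range n))

theorem quasiIso_of_artinian_base_change_quasiIso_general
    (hf : Function.Surjective f) (hker : IsNilpotent (RingHom.ker f))
    {K L : ChainComplex (ModuleCat.{0} R) ℕ} (φ : K ⟶ L)
    (hKflat : ∀ i : ℕ, Module.Flat R (K.X i)) (hLflat : ∀ i : ℕ, Module.Flat R (L.X i))
    (hqis : QuasiIso ((baseChangeComplexFunctor f).map φ)) :
    QuasiIso φ := by
  have exists_rel (j : ℕ) : ∃ i, (ComplexShape.down ℕ).Rel i j := ⟨j + 1, rfl⟩
  have baseChange_acyclic :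
      ((baseChangeComplexFunctor f).obj (cylinderShortComplex φ).X₃).Acyclic :=
    (quasiIso_map_iff_acyclic_map_cylinderShortComplex_X₃ φ exists_rel _).mp hqis
  rw [quasiIso_iff_acyclic_cylinderShortComplex_X₃ φ exists_rel]
  exact acyclic_of_acyclic_baseChange hf hker (flat_cylinderShortComplex_X₃_X φ)
    baseChange_acyclic

end NilpotentBaseChange

/-- Let `R` be a commutative Artinian local algebra over a field `k` and `f : R → S` a
surjective ring homomorphism with `S` nontrivial.  If `φ : K ⟶ L` is a morphism of
`ℕ`-indexed chain complexes of flat `R`-modules whose base change `φ ⊗_R S` is a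
quasi-isomorphism, then `φ` is a quasi-isomorphism. -/
theorem quasiIso_of_artinian_base_change_quasiIso
    (k : Type) [Field k] (R : Type) [CommRing R] [Algebra k R]
    [IsArtinianRing R] [IsLocalRing R]
    (S : Type) [CommRing S] [Nontrivial S] (f : R →+* S) (hf : Function.Surjective f)
    {K L : ChainComplex (ModuleCat.{0} R) ℕ} (φ : K ⟶ L)
    (hKflat : ∀ i : ℕ, Module.Flat R (K.X i)) (hLflat : ∀ i : ℕ, Module.Flat R (L.X i))
    (hqis : QuasiIso ((baseChangeComplexFunctor f).map φ)) :
    QuasiIso φ :=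
  quasiIso_of_artinian_base_change_quasiIso_general hf
    (isNilpotent_of_isArtinianRing_of_ne_top (RingHom.ker_ne_top f)) φ hKflat hLflat hqis
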